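/- Suppose b < a (equivalently b < 1). Fix c ∈ ℝ, and for N = 2n let Fix_c be the number of fixed points of the random permutation obtained after K_N = ⌊(N/(2b))·(log N − c)⌋ steps of the bRT shuffle started at the identity. Then Fix_c converges in distribution as N → ∞ to a Poisson random variable with mean 1 + e^c/2; that is, for every k ∈ ℕ, ℙ(Fix_c = k) → e^{−(1 + e^c/2)}·(1 + e^c/2)^k / k!. -/

import Mathlib

open scoped BigOperators

noncomputable section

namespace BRT

/-- The transition matrix of the biased random transposition shuffle on `𝔖_N` determined
by the set `A ⊆ [N]` (with `B = Aᶜ`) and the bias parameters `a`, `b`: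
`P(x,y) = 2a²/N²` if `y x⁻¹` is a transposition of two elements of `A`, `2b²/N²` if it is a
transposition of two elements of `B`, `2ab/N²` if it transposes an element of `A` with one
of `B`, `(a²|A| + b²|B|)/N²` if `y = x`, and `0` otherwise. -/
def transMat (a b : ℝ) {N : ℕ} (A : Finset (Fin N)) :
    Matrix (Equiv.Perm (Fin N)) (Equiv.Perm (Fin N)) ℝ :=
  fun x y =>
    if y = x then (a ^ 2 * A.card + b ^ 2 * Aᶜ.card) / (N : ℝ) ^ 2
    else if ∃ i j : Fin N, i ≠ j ∧ i ∈ A ∧ j ∈ A ∧ y * x⁻¹ = Equiv.swap i j then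
      2 * a ^ 2 / (N : ℝ) ^ 2
    else if ∃ i j : Fin N, i ≠ j ∧ i ∉ A ∧ j ∉ A ∧ y * x⁻¹ = Equiv.swap i j then
      2 * b ^ 2 / (N : ℝ) ^ 2
    else if ∃ i j : Fin N, i ∈ A ∧ j ∉ A ∧ y * x⁻¹ = Equiv.swap i j then
      2 * a * b / (N : ℝ) ^ 2
    else 0

/-- Total variation distance between two probability mass functions on a finite type. -/
def dTV {α : Type*} [Fintype α] (p q : α → ℝ) : ℝ :=
  (∑ x, |p x - q x|) / 2

/-- The uniform distribution on permutations of `Fin N`. -/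
def unif (N : ℕ) : Equiv.Perm (Fin N) → ℝ :=
  fun _ => ((N.factorial : ℝ))⁻¹


open Matrix in
lemma spectral_real {ι : Type*} [Fintype ι] [DecidableEq ι] (X : Matrix ι ι ℝ)
    (hX : Xᵀ = X) : ∃ (U : Matrix ι ι ℝ) (d : ι → ℝ),
      U * Uᵀ = 1 ∧ Uᵀ * U = 1 ∧ X = U * diagonal d * Uᵀ := by
  have h : X.IsHermitian := by
    rw [Matrix.IsHermitian, conjTranspose_eq_transpose_of_trivial]; exact hX
  have hs := h.spectral_theorem
  rw [Unitary.conjStarAlgAut_apply] at hs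
  refine ⟨h.eigenvectorUnitary, h.eigenvalues, ?_, ?_, ?_⟩
  · have := Unitary.mul_star_self_of_mem h.eigenvectorUnitary.2
    rwa [star_eq_conjTranspose, conjTranspose_eq_transpose_of_trivial] at this
  · have := Unitary.star_mul_self_of_mem h.eigenvectorUnitary.2
    rwa [star_eq_conjTranspose, conjTranspose_eq_transpose_of_trivial] at this
  · rw [star_eq_conjTranspose, conjTranspose_eq_transpose_of_trivial] at hs
    exact hs

open Matrix in
lemma conj_pow' {ι : Type*} [Fintype ι] [DecidableEq ι] (U D : Matrix ι ι ℝ)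
    (h1 : U * Uᵀ = 1) (h2 : Uᵀ * U = 1) (K : ℕ) :
    (U * D * Uᵀ) ^ K = U * D ^ K * Uᵀ := by
  induction K with
  | zero => simp [h1]
  | succ K ih =>
    rw [pow_succ, ih, pow_succ]
    calc U * D ^ K * Uᵀ * (U * D * Uᵀ) = U * D ^ K * (Uᵀ * U) * D * Uᵀ := by
          simp only [Matrix.mul_assoc]
      _ = _ := by rw [h2, Matrix.mul_one]; simp only [Matrix.mul_assoc]

open Matrix in
lemma trace_conj_diag_pow {ι : Type*} [Fintype ι] [DecidableEq ι] (U : Matrix ι ι ℝ) (d : ι → ℝ)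
    (h1 : U * Uᵀ = 1) (h2 : Uᵀ * U = 1) (K : ℕ) :
    trace ((U * diagonal d * Uᵀ) ^ K) = ∑ i, d i ^ K := by
  rw [conj_pow' U _ h1 h2, trace_mul_comm, ← Matrix.mul_assoc, h2, Matrix.one_mul, diagonal_pow,
    trace_diagonal]
  simp

/-- quadratic form -/
def qf {ι : Type*} [Fintype ι] (X : Matrix ι ι ℝ) (u : ι → ℝ) : ℝ := ∑ x, ∑ y, X x y * u x * u y

open Matrix in
lemma conj_apply_diag {ι : Type*} [Fintype ι] (X U : Matrix ι ι ℝ) (i : ι) :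
    (Uᵀ * X * U) i i = qf X (fun x => U x i) := by
  simp only [qf, Matrix.mul_apply, Matrix.transpose_apply, Finset.sum_mul]
  rw [Finset.sum_comm]
  refine Finset.sum_congr rfl fun x _ => Finset.sum_congr rfl fun y _ => by ring

open Matrix in
lemma trace_pow_mono {ι : Type*} [Fintype ι] [DecidableEq ι] (X Y : Matrix ι ι ℝ)
    (hX : Xᵀ = X) (hY : Yᵀ = Y) (h0 : ∀ u, 0 ≤ qf X u) (hle : ∀ u, qf X u ≤ qf Y u) (K : ℕ) :
    trace (X ^ K) ≤ trace (Y ^ K) := by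
  obtain ⟨U, d, hU1, hU2, hXd⟩ := spectral_real X hX
  obtain ⟨V, e, hV1, hV2, hYd⟩ := spectral_real Y hY
  have tX : trace (X ^ K) = ∑ i, d i ^ K := by rw [hXd]; exact trace_conj_diag_pow U d hU1 hU2 K
  have tY : trace (Y ^ K) = ∑ i, e i ^ K := by rw [hYd]; exact trace_conj_diag_pow V e hV1 hV2 K
  have hd : ∀ i, d i = qf X (fun x => U x i) := by
    intro i
    rw [← conj_apply_diag, hXd]
    have : Uᵀ * (U * diagonal d * Uᵀ) * U = (Uᵀ * U) * diagonal d * (Uᵀ * U) := by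
      simp only [Matrix.mul_assoc]
    rw [this, hU2]; simp
  have he : ∀ i, e i = qf Y (fun x => V x i) := by
    intro i
    rw [← conj_apply_diag, hYd]
    have : Vᵀ * (V * diagonal e * Vᵀ) * V = (Vᵀ * V) * diagonal e * (Vᵀ * V) := by
      simp only [Matrix.mul_assoc]
    rw [this, hV2]; simp
  have he0 : ∀ i, 0 ≤ e i := fun i => by rw [he]; exact (h0 _).trans (hle _)
  set W : Matrix ι ι ℝ := Uᵀ * V with hW
  have hW1 : W * Wᵀ = 1 := by
    rw [hW, transpose_mul, transpose_transpose]
    calc Uᵀ * V * (Vᵀ * U) = Uᵀ * (V * Vᵀ) * U := by simp only [Matrix.mul_assoc]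
      _ = 1 := by rw [hV1, Matrix.mul_one, hU2]
  have hW2 : Wᵀ * W = 1 := by
    rw [hW, transpose_mul, transpose_transpose]
    calc Vᵀ * U * (Uᵀ * V) = Vᵀ * (U * Uᵀ) * V := by simp only [Matrix.mul_assoc]
      _ = 1 := by rw [hU1, Matrix.mul_one, hV2]
  have r1 : ∀ i, ∑ j, W i j ^ 2 = 1 := by
    intro i
    have := congrFun (congrFun hW1 i) i
    simp only [Matrix.mul_apply, transpose_apply, Matrix.one_apply_eq] at this
    rw [← this]; exact Finset.sum_congr rfl fun j _ => by ring
  have r2 : ∀ j, ∑ i, W i j ^ 2 = 1 := by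
    intro i
    have := congrFun (congrFun hW2 i) i
    simp only [Matrix.mul_apply, transpose_apply, Matrix.one_apply_eq] at this
    rw [← this]; exact Finset.sum_congr rfl fun j _ => by ring
  have hdY : ∀ i, d i ≤ ∑ j, W i j ^ 2 * e j := by
    intro i
    rw [hd i]
    refine (hle _).trans ?_
    rw [← conj_apply_diag, hYd]
    have : Uᵀ * (V * diagonal e * Vᵀ) * U = W * diagonal e * Wᵀ := by
      rw [hW, transpose_mul, transpose_transpose]; simp only [Matrix.mul_assoc]
    rw [this, Matrix.mul_apply]
    simp only [Matrix.mul_diagonal, transpose_apply]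
    exact le_of_eq (Finset.sum_congr rfl fun j _ => by ring)
  rw [tX, tY]
  calc ∑ i, d i ^ K ≤ ∑ i, ∑ j, W i j ^ 2 * e j ^ K := by
        refine Finset.sum_le_sum fun i _ => ?_
        have hdi : 0 ≤ d i := by rw [hd]; exact h0 _
        refine (pow_le_pow_left₀ hdi (hdY i) K).trans ?_
        exact Real.pow_arith_mean_le_arith_mean_pow Finset.univ (fun j => W i j ^ 2) e
          (fun j _ => sq_nonneg _) (r1 i) (fun j _ => he0 j) K
    _ = ∑ j, e j ^ K := by
        rw [Finset.sum_comm]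
        refine Finset.sum_congr rfl fun j _ => ?_
        rw [← Finset.sum_mul, r2, one_mul]

/-- Schur test with weights -/
lemma qf_le_schur {ι : Type*} [Fintype ι] (E : Matrix ι ι ℝ) (hE : ∀ x y, E x y = E y x)
    (h : ι → ℝ) (hh : ∀ x, 0 < h x) (ε : ℝ) (hs : ∀ x, ∑ y, |E x y| * (h y / h x) ≤ ε)
    (u : ι → ℝ) : |qf E u| ≤ ε * ∑ x, u x ^ 2 := by
  have key : ∀ x y, |E x y * u x * u y| ≤
      (|E x y| * (h y / h x) * u x ^ 2) / 2 + (|E y x| * (h x / h y) * u y ^ 2) / 2 := by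
    intro x y
    rw [← hE x y, abs_mul, abs_mul]
    have h1 := hh x
    have h2 := hh y
    have : |u x| * |u y| ≤ (h y / h x * u x ^ 2 + h x / h y * u y ^ 2) / 2 := by
      rw [← sq_abs (u x), ← sq_abs (u y)]
      have : h y / h x * |u x| ^ 2 + h x / h y * |u y| ^ 2 - 2 * (|u x| * |u y|)
        = (h y * |u x| - h x * |u y|) ^ 2 / (h x * h y) := by
        field_simp; ring
      have h3 : 0 ≤ (h y * |u x| - h x * |u y|) ^ 2 / (h x * h y) := by positivity
      linarith
    nlinarith [abs_nonneg (E x y)]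
  calc |qf E u| ≤ ∑ x, ∑ y, |E x y * u x * u y| :=
        (Finset.abs_sum_le_sum_abs _ _).trans
          (Finset.sum_le_sum fun x _ => Finset.abs_sum_le_sum_abs _ _)
    _ ≤ ∑ x, ∑ y, ((|E x y| * (h y / h x) * u x ^ 2) / 2 +
          (|E y x| * (h x / h y) * u y ^ 2) / 2) :=
        Finset.sum_le_sum fun x _ => Finset.sum_le_sum fun y _ => key x y
    _ = ∑ x, (∑ y, |E x y| * (h y / h x)) * u x ^ 2 := by
        simp only [Finset.sum_add_distrib]
        rw [Finset.sum_comm (f := fun x y => (|E y x| * (h x / h y) * u y ^ 2) / 2)]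
        rw [← Finset.sum_add_distrib]
        refine Finset.sum_congr rfl fun x _ => ?_
        rw [← Finset.sum_add_distrib, Finset.sum_mul]
        exact Finset.sum_congr rfl fun y _ => by ring
    _ ≤ ∑ x, ε * u x ^ 2 :=
        Finset.sum_le_sum fun x _ => mul_le_mul_of_nonneg_right (hs x) (sq_nonneg _)
    _ = _ := by rw [Finset.mul_sum]

/-- diagonal dominance -/
lemma qf_ge_half {ι : Type*} [Fintype ι] [DecidableEq ι] (X : Matrix ι ι ℝ)
    (hX : ∀ x y, X x y = X y x)
    (hn : ∀ x y, 0 ≤ X x y) (hs : ∀ x, ∑ y, X x y ≤ 1) (hd : ∀ x, 3 / 4 ≤ X x x)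
    (u : ι → ℝ) : (1 / 2) * ∑ x, u x ^ 2 ≤ qf X u := by
  have key : ∀ x y, (if x = y then 2 * X x x * u x ^ 2 else 0)
      - X x y * u x ^ 2 / 2 - X y x * u y ^ 2 / 2 ≤ X x y * u x * u y := by
    intro x y
    rw [← hX x y]
    split_ifs with hxy
    · subst hxy; nlinarith
    · nlinarith [mul_nonneg (hn x y) (sq_nonneg (u x + u y))]
  have h1 : ∑ x, (2 * X x x * u x ^ 2 - (∑ y, X x y) * u x ^ 2) ≤ qf X u := by
    refine le_trans (le_of_eq ?_) (Finset.sum_le_sum fun x _ => Finset.sum_le_sum fun y _ => key x y)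
    simp only [Finset.sum_sub_distrib]
    rw [Finset.sum_comm (f := fun x y => X y x * u y ^ 2 / 2)]
    simp only [Finset.sum_ite_eq, Finset.mem_univ, if_true, sub_sub]
    rw [← Finset.sum_add_distrib]
    congr 1
    refine Finset.sum_congr rfl fun x _ => ?_
    rw [← Finset.sum_add_distrib, Finset.sum_mul]
    exact Finset.sum_congr rfl fun y _ => by ring
  refine le_trans ?_ h1
  rw [Finset.mul_sum]
  refine Finset.sum_le_sum fun x _ => ?_
  nlinarith [sq_nonneg (u x), hs x, hd x]

lemma qf_sub {ι : Type*} [Fintype ι] (X Y : Matrix ι ι ℝ) (u : ι → ℝ) :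
    qf (X - Y) u = qf X u - qf Y u := by
  simp only [qf, Matrix.sub_apply, sub_mul, Finset.sum_sub_distrib]

lemma qf_smul {ι : Type*} [Fintype ι] (c : ℝ) (Y : Matrix ι ι ℝ) (u : ι → ℝ) :
    qf (c • Y) u = c * qf Y u := by
  simp only [qf, Matrix.smul_apply, smul_eq_mul, Finset.mul_sum, mul_assoc]

/-- comparison of traces of powers -/
lemma trace_compare {ι : Type*} [Fintype ι] [DecidableEq ι] (X Y : Matrix ι ι ℝ)
    (hX : ∀ x y, X x y = X y x) (hY : ∀ x y, Y x y = Y y x)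
    (hXn : ∀ x y, 0 ≤ X x y) (hXs : ∀ x, ∑ y, X x y ≤ 1) (hXd : ∀ x, 3 / 4 ≤ X x x)
    (hYn : ∀ x y, 0 ≤ Y x y) (hYs : ∀ x, ∑ y, Y x y ≤ 1) (hYd : ∀ x, 3 / 4 ≤ Y x x)
    (h : ι → ℝ) (hh : ∀ x, 0 < h x) (ε : ℝ) (hε : 0 ≤ ε)
    (hs : ∀ x, ∑ y, |X x y - Y x y| * (h y / h x) ≤ ε) (K : ℕ) :
    Matrix.trace (X ^ K) ≤ (1 + 2 * ε) ^ K * Matrix.trace (Y ^ K) := by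
  have h1 : Matrix.trace (((1 + 2 * ε) • Y) ^ K) = (1 + 2 * ε) ^ K * Matrix.trace (Y ^ K) := by
    rw [smul_pow, Matrix.trace_smul, smul_eq_mul]
  rw [← h1]
  refine trace_pow_mono X _ (Matrix.ext fun i j => hX j i)
    (Matrix.ext fun i j => by simp [hY j i]) (fun u => ?_) (fun u => ?_) K
  · exact le_trans (by positivity) (qf_ge_half X hX hXn hXs hXd u)
  · rw [qf_smul]
    have a1 := qf_le_schur (X - Y) (fun x y => by simp [hX x y, hY x y]) h hh ε
      (fun x => by simpa using hs x) u
    rw [qf_sub] at a1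
    have a2 := (abs_le.1 a1).2
    have a3 := qf_ge_half Y hY hYn hYs hYd u
    nlinarith


/-! ### Tuples -/

def QQ {N : ℕ} (p : Fin N → ℝ) (m : ℕ) : Matrix (Fin m → Fin N) (Fin m → Fin N) ℝ :=
  fun x y => ∑ i, ∑ j, p i * p j * (if y = Equiv.swap i j ∘ x then 1 else 0)

def q1 {N : ℕ} (p : Fin N → ℝ) : Matrix (Fin N) (Fin N) ℝ :=
  fun x y => 2 * p x * p y + (if x = y then 1 - 2 * p x else 0)

def RR {N : ℕ} (p : Fin N → ℝ) (m : ℕ) : Matrix (Fin m → Fin N) (Fin m → Fin N) ℝ :=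
  fun x y => ∏ l, q1 p (x l) (y l)

open Classical in
def Qt {N : ℕ} (p : Fin N → ℝ) (m : ℕ) : Matrix (Fin m → Fin N) (Fin m → Fin N) ℝ :=
  fun x y => if Function.Injective x then QQ p m x y
    else if Function.Injective y then 0 else RR p m x y

def SW {N : ℕ} (p : Fin N → ℝ) : Matrix (Equiv.Perm (Fin N)) (Equiv.Perm (Fin N)) ℝ :=
  fun σ π => ∑ i, ∑ j, p i * p j * (if π = Equiv.swap i j * σ then 1 else 0)

section gen
variable {N : ℕ} {p : Fin N → ℝ} {m : ℕ}

lemma swap_comp_symm (i j : Fin N) (x y : Fin m → Fin N) :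
    y = Equiv.swap i j ∘ x ↔ x = Equiv.swap i j ∘ y := by
  constructor <;> (rintro rfl; ext l; simp)

lemma swap_comp_inj (i j : Fin N) (x : Fin m → Fin N) :
    Function.Injective (Equiv.swap i j ∘ x) ↔ Function.Injective x :=
  (Equiv.swap i j).injective.of_comp_iff x

lemma QQ_symm (x y : Fin m → Fin N) : QQ p m x y = QQ p m y x := by
  unfold QQ
  simp only [swap_comp_symm _ _ x y]

lemma QQ_nonneg (hp : ∀ i, 0 ≤ p i) (x y : Fin m → Fin N) : 0 ≤ QQ p m x y := by
  refine Finset.sum_nonneg fun i _ => Finset.sum_nonneg fun j _ => ?_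
  have := hp i
  have := hp j
  split_ifs <;> simp <;> positivity

lemma sum_pp (hs : ∑ i, p i = 1) : ∑ i, ∑ j, p i * p j = 1 := by
  simp only [← Finset.mul_sum, hs, mul_one]

lemma QQ_sum (hs : ∑ i, p i = 1) (x : Fin m → Fin N) : ∑ y, QQ p m x y = 1 := by
  unfold QQ
  rw [Finset.sum_comm]
  refine Eq.trans ?_ (sum_pp hs)
  refine Finset.sum_congr rfl fun i _ => ?_
  rw [Finset.sum_comm]
  refine Finset.sum_congr rfl fun j _ => ?_
  rw [← Finset.mul_sum]; simp

lemma QQ_zero (x y : Fin m → Fin N) (h : ¬ (Function.Injective x ↔ Function.Injective y)) :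
    QQ p m x y = 0 := by
  refine Finset.sum_eq_zero fun i _ => Finset.sum_eq_zero fun j _ => ?_
  rw [if_neg, mul_zero]
  rintro rfl
  exact h (swap_comp_inj i j x).symm

lemma q1_symm (x y : Fin N) : q1 p x y = q1 p y x := by
  unfold q1
  by_cases h : x = y
  · subst h; rfl
  · rw [if_neg h, if_neg (Ne.symm h)]; ring

lemma q1_nonneg (hp : ∀ i, 0 ≤ p i) (hp2 : ∀ i, p i ≤ 1 / 2) (x y : Fin N) : 0 ≤ q1 p x y := by
  unfold q1
  have h1 := hp x
  have h2 := hp y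
  have h3 := hp2 x
  have : 0 ≤ 2 * p x * p y := by positivity
  split_ifs <;> linarith

lemma q1_sum (hs : ∑ i, p i = 1) (x : Fin N) : ∑ y, q1 p x y = 1 := by
  unfold q1
  rw [Finset.sum_add_distrib, ← Finset.mul_sum, hs]; simp

lemma q1_diag_ge (x : Fin N) : 1 - 2 * p x ≤ q1 p x x := by
  unfold q1
  rw [if_pos rfl]; nlinarith [sq_nonneg (p x)]

lemma RR_symm (x y : Fin m → Fin N) : RR p m x y = RR p m y x :=
  Finset.prod_congr rfl fun l _ => q1_symm _ _

lemma RR_nonneg (hp : ∀ i, 0 ≤ p i) (hp2 : ∀ i, p i ≤ 1 / 2) (x y : Fin m → Fin N) :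
    0 ≤ RR p m x y := Finset.prod_nonneg fun l _ => q1_nonneg hp hp2 _ _

lemma RR_sum (hs : ∑ i, p i = 1) (x : Fin m → Fin N) : ∑ y, RR p m x y = 1 := by
  have := Finset.prod_univ_sum (fun _ : Fin m => (Finset.univ : Finset (Fin N)))
    (fun l y => q1 p (x l) y)
  rw [Fintype.piFinset_univ] at this
  unfold RR
  rw [← this]
  simp [q1_sum hs]

lemma prod_ge_one_sub {ι : Type*} (S : Finset ι) (f g : ι → ℝ) (hg : ∀ i, 0 ≤ g i)
    (hg1 : ∀ i, g i ≤ 1) (hf : ∀ i, 1 - g i ≤ f i) : 1 - ∑ i ∈ S, g i ≤ ∏ i ∈ S, f i := by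
  classical
  induction S using Finset.induction_on with
  | empty => simp
  | insert i S hi ih =>
    rw [Finset.sum_insert hi, Finset.prod_insert hi]
    have h0 : 0 ≤ ∏ i ∈ S, (1 - g i) := Finset.prod_nonneg fun j _ => by linarith [hg1 j]
    have h1 : 0 ≤ ∏ i ∈ S, f i := Finset.prod_nonneg fun j _ => by linarith [hg1 j, hf j]
    have h2 : 0 ≤ ∑ i ∈ S, g i := Finset.sum_nonneg fun j _ => hg j
    have h3 : (1 - g i) * ∏ i ∈ S, f i ≤ f i * ∏ i ∈ S, f i :=
      mul_le_mul_of_nonneg_right (hf i) h1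
    have h4 : (1 - g i) * (1 - ∑ i ∈ S, g i) ≤ (1 - g i) * ∏ i ∈ S, f i :=
      mul_le_mul_of_nonneg_left ih (by linarith [hg1 i])
    nlinarith [mul_nonneg (hg i) h2]

lemma RR_diag_ge (hp : ∀ i, 0 ≤ p i) (hp2 : ∀ i, p i ≤ 1 / 2) (x : Fin m → Fin N) :
    1 - 2 * ∑ l, p (x l) ≤ RR p m x x := by
  rw [Finset.mul_sum]
  exact prod_ge_one_sub Finset.univ _ _ (fun l => by linarith [hp (x l)])
    (fun l => by linarith [hp2 (x l)]) (fun l => q1_diag_ge _)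

lemma QQ_diag_ge (hp : ∀ i, 0 ≤ p i) (hs : ∑ i, p i = 1) (x : Fin m → Fin N) :
    1 - 2 * ∑ l, p (x l) ≤ QQ p m x x := by
  set c : Fin N → ℝ := fun i => ∑ l, (if x l = i then 1 else 0) with hc
  have hcn : ∀ i, 0 ≤ c i := fun i => Finset.sum_nonneg fun l _ => by split_ifs <;> simp
  have hc1 : ∀ l, 1 ≤ c (x l) := by
    intro l
    have := Finset.single_le_sum (f := fun l' => if x l' = x l then (1 : ℝ) else 0)
      (fun l' _ => by split_ifs <;> simp) (Finset.mem_univ l)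
    refine le_trans ?_ this
    simp
  have hcp : ∑ i, p i * c i = ∑ l, p (x l) := by
    simp only [hc, Finset.mul_sum]
    rw [Finset.sum_comm]
    simp
  have key : ∀ i j, p i * p j * (1 - c i - c j) ≤
      p i * p j * (if x = Equiv.swap i j ∘ x then 1 else 0) := by
    intro i j
    refine mul_le_mul_of_nonneg_left ?_ (mul_nonneg (hp i) (hp j))
    split_ifs with h
    · linarith [hcn i, hcn j]
    · by_contra hcon
      push Not at hcon
      apply h
      ext l
      have hi : x l ≠ i := by
        rintro rfl
        linarith [hc1 l, hcn j]
      have hj : x l ≠ j := by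
        rintro rfl
        linarith [hc1 l, hcn i]
      simp [Equiv.swap_apply_of_ne_of_ne hi hj]
  refine le_trans (le_of_eq ?_) (Finset.sum_le_sum fun i _ => Finset.sum_le_sum fun j _ => key i j)
  have e1 : ∀ i j, p i * p j * (1 - c i - c j) = p i * p j - (p i * c i) * p j - p i * (p j * c j) := by
    intro i j; ring
  simp only [e1, Finset.sum_sub_distrib]
  rw [sum_pp hs]
  simp only [← Finset.mul_sum, hs, hcp, ← Finset.sum_mul]
  ring

lemma QQ_update_ge (hp : ∀ i, 0 ≤ p i) (x : Fin m → Fin N) (hx : Function.Injective x)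
    (l : Fin m) (z : Fin N) (hz : ∀ l, x l ≠ z) :
    2 * p (x l) * p z ≤ QQ p m x (Function.update x l z) := by
  have e1 : Function.update x l z = Equiv.swap (x l) z ∘ x := by
    ext l'
    by_cases h : l' = l
    · subst h; simp
    · have h1 : x l' ≠ x l := fun h' => h (hx h')
      simp [Function.update_of_ne h, Equiv.swap_apply_of_ne_of_ne h1 (hz l')]
  have e2 : Function.update x l z = Equiv.swap z (x l) ∘ x := by
    rw [Equiv.swap_comm]; exact e1
  have nn : ∀ i j, 0 ≤ p i * p j *
      (if Function.update x l z = Equiv.swap i j ∘ x then (1 : ℝ) else 0) := by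
    intro i j
    have := hp i
    have := hp j
    split_ifs <;> simp <;> positivity
  unfold QQ
  rw [← Finset.sum_product']
  have hne : ((x l, z) : Fin N × Fin N) ≠ (z, x l) := by
    intro h
    exact hz l (Prod.ext_iff.1 h).1
  have := Finset.sum_le_sum_of_subset_of_nonneg (s := {(x l, z), (z, x l)})
    (t := Finset.univ ×ˢ Finset.univ) (f := fun ij : Fin N × Fin N => p ij.1 * p ij.2 *
      (if Function.update x l z = Equiv.swap ij.1 ij.2 ∘ x then (1 : ℝ) else 0))
    (by intro a _; simp) (fun a _ _ => nn _ _)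
  refine le_trans (le_of_eq ?_) this
  rw [Finset.sum_pair hne]
  rw [if_pos e1, if_pos e2]
  ring

lemma RR_update_ge (hp : ∀ i, 0 ≤ p i) (hp2 : ∀ i, p i ≤ 1 / 2) (x : Fin m → Fin N)
    (l : Fin m) (z : Fin N) (hz : ∀ l, x l ≠ z) :
    (1 - 2 * ∑ l, p (x l)) * (2 * p (x l) * p z) ≤ RR p m x (Function.update x l z) := by
  unfold RR
  rw [← Finset.mul_prod_erase Finset.univ _ (Finset.mem_univ l)]
  have e : ∏ l' ∈ Finset.univ.erase l, q1 p (x l') (Function.update x l z l')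
      = ∏ l' ∈ Finset.univ.erase l, q1 p (x l') (x l') :=
    Finset.prod_congr rfl fun l' h => by
      rw [Function.update_of_ne (Finset.ne_of_mem_erase h)]
  rw [e, Function.update_self]
  have h1 : q1 p (x l) z = 2 * p (x l) * p z := by
    unfold q1; rw [if_neg (hz l), add_zero]
  rw [h1, mul_comm]
  refine mul_le_mul_of_nonneg_left ?_ (by have := hp (x l); have := hp z; positivity)
  have h2 := prod_ge_one_sub (Finset.univ.erase l) (fun l' => q1 p (x l') (x l'))
    (fun l' => 2 * p (x l')) (fun l => by linarith [hp (x l)])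
    (fun l => by linarith [hp2 (x l)]) (fun l => q1_diag_ge _)
  refine le_trans ?_ h2
  have h3 : ∑ l' ∈ Finset.univ.erase l, 2 * p (x l') ≤ ∑ l', 2 * p (x l') :=
    Finset.sum_le_sum_of_subset_of_nonneg (Finset.erase_subset _ _)
      (fun i _ _ => by linarith [hp (x i)])
  rw [Finset.mul_sum]; linarith

lemma sum_abs_sub_le {T ι : Type*} [Fintype T] [Fintype ι] (Q R : T → ℝ)
    (hQ : ∀ y, 0 ≤ Q y) (hR : ∀ y, 0 ≤ R y)
    (hQs : ∑ y, Q y = 1) (hRs : ∑ y, R y = 1) (f : ι → T) (hf : Function.Injective f)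
    (g : ι → ℝ) (hgQ : ∀ i, g i ≤ Q (f i)) (hgR : ∀ i, g i ≤ R (f i)) :
    ∑ y, |Q y - R y| ≤ 2 * (1 - ∑ i, g i) := by
  have h1 : ∑ y, |Q y - R y| = 2 * (1 - ∑ y, min (Q y) (R y)) := by
    have : ∀ y, |Q y - R y| = Q y + R y - 2 * min (Q y) (R y) := by
      intro y
      rcases le_total (Q y) (R y) with h | h
      · rw [min_eq_left h, abs_of_nonpos (by linarith)]; ring
      · rw [min_eq_right h, abs_of_nonneg (by linarith)]; ring
    simp only [this]
    rw [Finset.sum_sub_distrib, Finset.sum_add_distrib, hQs, hRs, ← Finset.mul_sum]; ring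
  have h2 : ∑ i, g i ≤ ∑ y, min (Q y) (R y) := by
    calc ∑ i, g i ≤ ∑ i, min (Q (f i)) (R (f i)) :=
          Finset.sum_le_sum fun i _ => le_min (hgQ i) (hgR i)
      _ = ∑ y ∈ Finset.univ.map ⟨f, hf⟩, min (Q y) (R y) := by rw [Finset.sum_map]; rfl
      _ ≤ _ := Finset.sum_le_sum_of_subset_of_nonneg (Finset.subset_univ _)
          (fun y _ _ => le_min (hQ y) (hR y))
  linarith

lemma row_diff (hp : ∀ i, 0 ≤ p i) (hp2 : ∀ i, p i ≤ 1 / 2) (hs : ∑ i, p i = 1)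
    (x : Fin m → Fin N) (hx : Function.Injective x) :
    ∑ y, |QQ p m x y - RR p m x y| ≤ 12 * (∑ l, p (x l)) ^ 2 := by
  classical
  set s := ∑ l, p (x l) with hsdef
  have hs0 : 0 ≤ s := Finset.sum_nonneg fun l _ => hp _
  let f : Option (Fin m × {z : Fin N // ∀ l, x l ≠ z}) → (Fin m → Fin N) :=
    fun o => o.elim x (fun lz => Function.update x lz.1 lz.2.1)
  let g : Option (Fin m × {z : Fin N // ∀ l, x l ≠ z}) → ℝ :=
    fun o => o.elim (1 - 2 * s) (fun lz => (1 - 2 * s) * (2 * p (x lz.1) * p lz.2.1))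
  have hf : Function.Injective f := by
    rintro (_ | ⟨l, z⟩) (_ | ⟨l', z'⟩) h
    · rfl
    · exfalso
      have := congrFun h l'
      simp [f] at this
      exact z'.2 _ this
    · exfalso
      have := congrFun h l
      simp [f] at this
      exact z.2 _ this.symm
    · have h1 := congrFun h l
      simp only [f, Option.elim, Function.update_self] at h1
      by_cases hl : l = l'
      · subst hl
        simp only [Function.update_self] at h1
        rw [Subtype.ext h1]
      · rw [Function.update_of_ne hl] at h1
        exact absurd h1.symm (z.2 l)
  have hgQ : ∀ o, g o ≤ QQ p m x (f o) := by
    rintro (_ | ⟨l, z⟩)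
    · exact QQ_diag_ge hp hs x
    · refine le_trans ?_ (QQ_update_ge hp x hx l z.1 z.2)
      have h1 : 0 ≤ 2 * p (x l) * p z.1 := by have := hp (x l); have := hp z.1; positivity
      have : g (some (l, z)) = (1 - 2 * s) * (2 * p (x l) * p z.1) := rfl
      rw [this]
      nlinarith
  have hgR : ∀ o, g o ≤ RR p m x (f o) := by
    rintro (_ | ⟨l, z⟩)
    · exact RR_diag_ge hp hp2 x
    · exact RR_update_ge hp hp2 x l z.1 z.2
  refine (sum_abs_sub_le _ _ (QQ_nonneg hp x) (RR_nonneg hp hp2 x) (QQ_sum hs x) (RR_sum hs x)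
    f hf g hgQ hgR).trans ?_
  have hz : ∑ z : {z : Fin N // ∀ l, x l ≠ z}, p z.1 = 1 - s := by
    have h1 : ∑ z : {z : Fin N // ∀ l, x l ≠ z}, p z.1
        = ∑ z ∈ Finset.univ.filter (fun z => ∀ l, x l ≠ z), p z := by
      rw [Finset.sum_subtype (p := fun z => ∀ l, x l ≠ z)]; simp
    have h2 : s = ∑ z ∈ Finset.univ.filter (fun z => ¬ ∀ l, x l ≠ z), p z := by
      have : Finset.univ.filter (fun z => ¬ ∀ l, x l ≠ z) = Finset.univ.map ⟨x, hx⟩ := by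
        ext z; simp
      rw [this, Finset.sum_map]; rfl
    rw [h1, h2, ← hs, ← Finset.sum_filter_add_sum_filter_not Finset.univ (fun z => ∀ l, x l ≠ z) p]
    ring
  have hg : ∑ o, g o = (1 - 2 * s) + (1 - 2 * s) * (2 * s * (1 - s)) := by
    rw [Fintype.sum_option]
    simp only [g, Option.elim]
    rw [← Finset.mul_sum, Fintype.sum_prod_type]
    simp only [← Finset.mul_sum, hz]
    rw [← Finset.sum_mul, ← Finset.mul_sum]
  rw [hg]
  nlinarith [mul_nonneg hs0 (mul_nonneg hs0 hs0)]

lemma Qt_symm (x y : Fin m → Fin N) : Qt p m x y = Qt p m y x := by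
  unfold Qt
  by_cases hx : Function.Injective x <;> by_cases hy : Function.Injective y
  · simp [hx, hy, QQ_symm x y]
  · simp only [hx, hy, if_true, if_false]
    exact QQ_zero _ _ (by simp [hx, hy])
  · simp only [hx, hy, if_true, if_false]
    exact (QQ_zero _ _ (by simp [hx, hy])).symm
  · simp [hx, hy, RR_symm x y]

lemma Qt_nonneg (hp : ∀ i, 0 ≤ p i) (hp2 : ∀ i, p i ≤ 1 / 2) (x y : Fin m → Fin N) :
    0 ≤ Qt p m x y := by
  unfold Qt
  split_ifs
  · exact QQ_nonneg hp _ _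
  · exact le_rfl
  · exact RR_nonneg hp hp2 _ _

lemma Qt_le_RR (hp : ∀ i, 0 ≤ p i) (hp2 : ∀ i, p i ≤ 1 / 2) (x y : Fin m → Fin N)
    (hx : ¬ Function.Injective x) : Qt p m x y ≤ RR p m x y := by
  unfold Qt
  rw [if_neg hx]
  split_ifs
  · exact RR_nonneg hp hp2 _ _
  · exact le_rfl

lemma Qt_sum (hp : ∀ i, 0 ≤ p i) (hp2 : ∀ i, p i ≤ 1 / 2) (hs : ∑ i, p i = 1)
    (x : Fin m → Fin N) : ∑ y, Qt p m x y ≤ 1 := by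
  by_cases hx : Function.Injective x
  · simp only [Qt, hx, if_true]; exact (QQ_sum hs x).le
  · rw [← RR_sum hs x]
    exact Finset.sum_le_sum fun y _ => Qt_le_RR hp hp2 x y hx

lemma sum_p_le {δ : ℝ} (hδ : ∀ i, p i ≤ δ) (x : Fin m → Fin N) : ∑ l, p (x l) ≤ m * δ := by
  refine (Finset.sum_le_sum fun l _ => hδ (x l)).trans (le_of_eq ?_)
  simp

lemma Qt_RR_schur (hp : ∀ i, 0 ≤ p i) (hp2 : ∀ i, p i ≤ 1 / 2) (hs : ∑ i, p i = 1)
    {δ t ε : ℝ} (hδ : ∀ i, p i ≤ δ) (ht : 1 ≤ t)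
    (hε1 : 12 * (m * δ) ^ 2 * t ≤ ε) (hε2 : 2 * (m * δ) / t ≤ ε) :
    ∃ h : (Fin m → Fin N) → ℝ, (∀ x, 0 < h x) ∧
      ∀ x, ∑ y, |Qt p m x y - RR p m x y| * (h y / h x) ≤ ε := by
  classical
  have ht0 : 0 < t := by linarith
  refine ⟨fun x => if Function.Injective x then 1 else t, fun x => by dsimp only; split_ifs <;> linarith, ?_⟩
  intro x
  have hs0 : 0 ≤ ∑ l, p (x l) := Finset.sum_nonneg fun l _ => hp _
  have hsl := sum_p_le hδ x
  by_cases hx : Function.Injective x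
  · refine le_trans ?_ hε1
    refine le_trans (b := (∑ y, |QQ p m x y - RR p m x y|) * t) ?_ ?_
    · rw [Finset.sum_mul]
      refine Finset.sum_le_sum fun y _ => ?_
      simp only [Qt, hx, if_true, div_one]
      refine mul_le_mul_of_nonneg_left ?_ (abs_nonneg _)
      split_ifs <;> linarith
    · refine mul_le_mul_of_nonneg_right ((row_diff hp hp2 hs x hx).trans ?_) ht0.le
      have := pow_le_pow_left₀ hs0 hsl 2
      linarith
  · refine le_trans ?_ hε2
    refine le_trans (b := (∑ y, (RR p m x y - if y = x then RR p m x x else 0)) / t) ?_ ?_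
    · rw [Finset.sum_div]
      refine Finset.sum_le_sum fun y _ => ?_
      simp only [Qt, hx, if_false]
      by_cases hy : Function.Injective y
      · have hyx : y ≠ x := by rintro rfl; exact hx hy
        simp only [hy, if_true, hyx, if_false, sub_zero, zero_sub, abs_neg,
          abs_of_nonneg (RR_nonneg hp hp2 x y)]
        rw [mul_one_div]
      · simp only [hy, if_false, sub_self, abs_zero, zero_mul]
        refine div_nonneg ?_ ht0.le
        split_ifs with h
        · subst h; simp
        · simpa using RR_nonneg hp hp2 x y
    · refine div_le_div_of_nonneg_right ?_ ht0.le
      rw [Finset.sum_sub_distrib, RR_sum hs]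
      simp only [Finset.sum_ite_eq', Finset.mem_univ, if_true]
      linarith [RR_diag_ge hp hp2 x]

lemma Qt_diag (hp : ∀ i, 0 ≤ p i) (hp2 : ∀ i, p i ≤ 1 / 2) (hs : ∑ i, p i = 1)
    {δ : ℝ} (hδ : ∀ i, p i ≤ δ) (hm : m * δ ≤ 1 / 8) (x : Fin m → Fin N) :
    3 / 4 ≤ Qt p m x x := by
  have hsl := sum_p_le hδ x
  unfold Qt
  split_ifs with hx
  · linarith [QQ_diag_ge hp hs x]
  · linarith [RR_diag_ge hp hp2 x]

lemma trace_Qt_RR (hp : ∀ i, 0 ≤ p i) (hp2 : ∀ i, p i ≤ 1 / 2) (hs : ∑ i, p i = 1)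
    {δ t ε : ℝ} (hδ : ∀ i, p i ≤ δ) (hm : m * δ ≤ 1 / 8) (ht : 1 ≤ t)
    (hε1 : 12 * (m * δ) ^ 2 * t ≤ ε) (hε2 : 2 * (m * δ) / t ≤ ε) (K : ℕ) :
    Matrix.trace (Qt p m ^ K) ≤ (1 + 2 * ε) ^ K * Matrix.trace (RR p m ^ K) ∧
    Matrix.trace (RR p m ^ K) ≤ (1 + 2 * ε) ^ K * Matrix.trace (Qt p m ^ K) := by
  obtain ⟨h, hh, hE⟩ := Qt_RR_schur hp hp2 hs hδ ht hε1 hε2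
  have hε : 0 ≤ ε := le_trans (by positivity) hε1
  have hRd : ∀ x, 3 / 4 ≤ RR p m x x := fun x => by
    linarith [RR_diag_ge hp hp2 x, sum_p_le hδ x]
  constructor
  · exact trace_compare _ _ Qt_symm RR_symm (Qt_nonneg hp hp2) (Qt_sum hp hp2 hs)
      (Qt_diag hp hp2 hs hδ hm) (RR_nonneg hp hp2) (fun x => (RR_sum hs x).le) hRd h hh ε hε hE K
  · exact trace_compare _ _ RR_symm Qt_symm (RR_nonneg hp hp2) (fun x => (RR_sum hs x).le) hRd
      (Qt_nonneg hp hp2) (Qt_sum hp hp2 hs)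
      (Qt_diag hp hp2 hs hδ hm) h hh ε hε
      (fun x => by simpa only [abs_sub_comm] using hE x) K

lemma RR_pow (K : ℕ) (x y : Fin m → Fin N) :
    (RR p m ^ K) x y = ∏ l, (q1 p ^ K) (x l) (y l) := by
  induction K generalizing y with
  | zero =>
    simp only [pow_zero, Matrix.one_apply]
    by_cases h : x = y
    · subst h; simp
    · rw [if_neg h]
      obtain ⟨l, hl⟩ := Function.ne_iff.1 h
      exact (Finset.prod_eq_zero (Finset.mem_univ l) (by simp [hl])).symm
  | succ K ih =>
    rw [pow_succ, Matrix.mul_apply]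
    simp only [pow_succ, Matrix.mul_apply, ih]
    have := Finset.prod_univ_sum (fun _ : Fin m => (Finset.univ : Finset (Fin N)))
      (fun l z => (q1 p ^ K) (x l) z * q1 p z (y l))
    rw [Fintype.piFinset_univ] at this
    rw [this]
    refine Finset.sum_congr rfl fun z _ => ?_
    rw [Finset.prod_mul_distrib]; rfl

lemma RR_trace (K : ℕ) : Matrix.trace (RR p m ^ K) = Matrix.trace (q1 p ^ K) ^ m := by
  simp only [Matrix.trace, Matrix.diag_apply, RR_pow]
  have := Finset.prod_univ_sum (fun _ : Fin m => (Finset.univ : Finset (Fin N)))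
    (fun l z => (q1 p ^ K) z z)
  rw [Fintype.piFinset_univ] at this
  rw [← this]; simp

lemma pow_nonneg_entries {ι : Type*} [Fintype ι] [DecidableEq ι] (X : Matrix ι ι ℝ)
    (hX : ∀ x y, 0 ≤ X x y) (K : ℕ) (x y : ι) : 0 ≤ (X ^ K) x y := by
  induction K generalizing y with
  | zero => simp only [pow_zero, Matrix.one_apply]; split_ifs <;> simp
  | succ K ih =>
    rw [pow_succ, Matrix.mul_apply]
    exact Finset.sum_nonneg fun z _ => mul_nonneg (ih z) (hX _ _)

lemma Qt_pow_le (hp : ∀ i, 0 ≤ p i) (hp2 : ∀ i, p i ≤ 1 / 2) (K : ℕ) (x y : Fin m → Fin N)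
    (hx : ¬ Function.Injective x) : (Qt p m ^ K) x y ≤ (RR p m ^ K) x y := by
  induction K generalizing x with
  | zero => simp
  | succ K ih =>
    rw [pow_succ', pow_succ', Matrix.mul_apply, Matrix.mul_apply]
    refine Finset.sum_le_sum fun z _ => ?_
    by_cases hz : Function.Injective z
    · have : Qt p m x z = 0 := by simp [Qt, hx, hz]
      rw [this, zero_mul]
      exact mul_nonneg (RR_nonneg hp hp2 _ _) (pow_nonneg_entries _ (RR_nonneg hp hp2) _ _ _)
    · exact mul_le_mul (Qt_le_RR hp hp2 x z hx) (ih z hz)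
        (pow_nonneg_entries _ (Qt_nonneg hp hp2) _ _ _) (RR_nonneg hp hp2 _ _)

lemma Qt_pow_inj (K : ℕ) (x y : Fin m → Fin N) (hx : Function.Injective x) :
    (Qt p m ^ K) x y = ∑ π, (SW p ^ K) 1 π * (if y = π ∘ x then 1 else 0) := by
  induction K generalizing y with
  | zero =>
    simp only [pow_zero, Matrix.one_apply]
    rw [Finset.sum_eq_single 1]
    · simp [eq_comm]
    · intro π _ h; simp [Ne.symm h]
    · simp
  | succ K ih =>
    rw [pow_succ, Matrix.mul_apply, pow_succ]
    simp only [Matrix.mul_apply, ih, Finset.sum_mul]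
    refine Eq.trans Finset.sum_comm (Eq.trans ?_ Finset.sum_comm)
    refine Finset.sum_congr rfl fun σ _ => ?_
    have h1 : ∀ z, (SW p ^ K) 1 σ * (if z = σ ∘ x then 1 else 0) * Qt p m z y
        = if z = σ ∘ x then (SW p ^ K) 1 σ * Qt p m z y else 0 := by
      intro z; split_ifs <;> simp
    simp only [h1, Finset.sum_ite_eq', Finset.mem_univ, if_true, mul_assoc]
    rw [← Finset.mul_sum]
    congr 1
    have hsx : Function.Injective (σ ∘ x) := σ.injective.comp hx
    simp only [Qt, hsx, if_true, QQ, SW, Finset.sum_mul]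
    refine Eq.trans ?_ Finset.sum_comm
    refine Finset.sum_congr rfl fun i _ => ?_
    refine Eq.trans ?_ Finset.sum_comm
    refine Finset.sum_congr rfl fun j _ => ?_
    have h2 : ∀ π : Equiv.Perm (Fin N), p i * p j * (if π = Equiv.swap i j * σ then 1 else 0) *
        (if y = π ∘ x then 1 else 0) = if π = Equiv.swap i j * σ then
          p i * p j * (if y = π ∘ x then 1 else 0) else 0 := by
      intro π; split_ifs <;> simp
    simp only [h2, Finset.sum_ite_eq', Finset.mem_univ, if_true]
    rfl

end gen


section gen2
variable {N : ℕ} {p : Fin N → ℝ} {m : ℕ}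

lemma card_inj_fixed (π : Equiv.Perm (Fin N)) (m : ℕ) :
    (Finset.univ.filter (fun x : Fin m → Fin N => Function.Injective x ∧ x = π ∘ x)).card
      = ((Finset.univ.filter fun i => π i = i).card).descFactorial m := by
  classical
  have h1 : (Finset.univ.filter fun i => π i = i).card = Fintype.card {i // π i = i} := by
    rw [Fintype.card_subtype]
  have h2 : (Finset.univ.filter
      (fun x : Fin m → Fin N => Function.Injective x ∧ x = π ∘ x)).card
      = Fintype.card {x : Fin m → Fin N // Function.Injective x ∧ x = π ∘ x} := by
    rw [Fintype.card_subtype]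
  have h3 : Fintype.card (Fin m ↪ {i // π i = i})
      = (Fintype.card {i // π i = i}).descFactorial m := by
    rw [Fintype.card_embedding_eq, Fintype.card_fin]
  rw [h1, h2, ← h3]
  refine Fintype.card_congr
    { toFun := fun x => ⟨fun l => ⟨x.1 l, (congrFun x.2.2 l).symm⟩, fun l l' h =>
        x.2.1 (congrArg Subtype.val h)⟩
      invFun := fun e => ⟨fun l => (e l).1, fun l l' h => e.injective (Subtype.ext h),
        funext fun l => (e l).2.symm⟩
      left_inv := fun x => rfl
      right_inv := fun e => rfl }

lemma card_inj_tuples (N m : ℕ) :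
    (Finset.univ.filter (fun x : Fin m → Fin N => Function.Injective x)).card
      = N.descFactorial m := by
  have := card_inj_fixed (1 : Equiv.Perm (Fin N)) m
  simpa using this

def FM (p : Fin N → ℝ) (K m : ℕ) : ℝ :=
  ∑ π, (SW p ^ K) 1 π * (((Finset.univ.filter fun i => π i = i).card).descFactorial m : ℕ)

lemma FM_eq (K m : ℕ) :
    FM p K m = ∑ x ∈ Finset.univ.filter (fun x : Fin m → Fin N => Function.Injective x),
      (Qt p m ^ K) x x := by
  have h : ∀ x ∈ Finset.univ.filter (fun x : Fin m → Fin N => Function.Injective x),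
      (Qt p m ^ K) x x = ∑ π, (SW p ^ K) 1 π * (if x = π ∘ x then 1 else 0) := by
    intro x hx
    exact Qt_pow_inj K x x (by simpa using hx)
  rw [Finset.sum_congr rfl h, Finset.sum_comm]
  refine Finset.sum_congr rfl fun π _ => ?_
  rw [← Finset.mul_sum, ← card_inj_fixed]
  congr 1
  rw [Finset.sum_boole, Finset.filter_filter]

lemma FM_trace (hp : ∀ i, 0 ≤ p i) (hp2 : ∀ i, p i ≤ 1 / 2) (K m : ℕ) (M : ℝ)
    (hM : ∀ x, (q1 p ^ K) x x ≤ M) :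
    FM p K m ≤ Matrix.trace (Qt p m ^ K) ∧
    Matrix.trace (Qt p m ^ K) ≤ FM p K m + ((N : ℝ) ^ m - N.descFactorial m) * M ^ m := by
  have h1 : Matrix.trace (Qt p m ^ K) = FM p K m +
      ∑ x ∈ Finset.univ.filter (fun x : Fin m → Fin N => ¬ Function.Injective x),
      (Qt p m ^ K) x x := by
    rw [FM_eq, Finset.sum_filter_add_sum_filter_not]; rfl
  have h2 : 0 ≤ ∑ x ∈ Finset.univ.filter (fun x : Fin m → Fin N => ¬ Function.Injective x),
      (Qt p m ^ K) x x :=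
    Finset.sum_nonneg fun x _ => pow_nonneg_entries _ (Qt_nonneg hp hp2) _ _ _
  have hc : ((Finset.univ.filter (fun x : Fin m → Fin N => ¬ Function.Injective x)).card : ℝ)
      = (N : ℝ) ^ m - N.descFactorial m := by
    have := Finset.card_filter_add_card_filter_not (s := (Finset.univ : Finset (Fin m → Fin N)))
      (fun x => Function.Injective x)
    rw [card_inj_tuples] at this
    have h3 : (Finset.univ : Finset (Fin m → Fin N)).card = N ^ m := by simp
    rw [h3] at this
    have h4 : ((N.descFactorial m : ℕ) : ℝ) +
      ((Finset.univ.filter (fun x : Fin m → Fin N => ¬ Function.Injective x)).card : ℝ)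
        = (N : ℝ) ^ m := by exact_mod_cast this
    linarith
  refine ⟨by linarith, ?_⟩
  rw [h1, ← hc]
  have : ∑ x ∈ Finset.univ.filter (fun x : Fin m → Fin N => ¬ Function.Injective x),
      (Qt p m ^ K) x x ≤
      ∑ x ∈ Finset.univ.filter (fun x : Fin m → Fin N => ¬ Function.Injective x), M ^ m := by
    refine Finset.sum_le_sum fun x hx => ?_
    refine (Qt_pow_le hp hp2 K x x (by simpa using hx)).trans ?_
    rw [RR_pow]
    refine (Finset.prod_le_prod (fun l _ => pow_nonneg_entries _ (q1_nonneg hp hp2) _ _ _)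
      (fun l _ => hM (x l))).trans ?_
    simp
  rw [Finset.sum_const, nsmul_eq_mul] at this
  linarith

lemma SW_nonneg (hp : ∀ i, 0 ≤ p i) (x y : Equiv.Perm (Fin N)) : 0 ≤ SW p x y := by
  refine Finset.sum_nonneg fun i _ => Finset.sum_nonneg fun j _ => ?_
  have := hp i
  have := hp j
  split_ifs <;> simp <;> positivity

lemma swap_eq_swap {i j k l : Fin N} (hij : i ≠ j) :
    Equiv.swap i j = Equiv.swap k l ↔ (k = i ∧ l = j) ∨ (k = j ∧ l = i) := by
  constructor
  · intro h
    have h1 := Equiv.congr_fun h i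
    have h2 := Equiv.congr_fun h j
    rw [Equiv.swap_apply_left, Equiv.swap_apply_def] at h1
    rw [Equiv.swap_apply_right, Equiv.swap_apply_def] at h2
    split_ifs at h1 h2 <;> grind
  · rintro (⟨rfl, rfl⟩ | ⟨rfl, rfl⟩)
    · rfl
    · exact Equiv.swap_comm _ _

lemma SW_swap (x : Equiv.Perm (Fin N)) {i j : Fin N} (hij : i ≠ j) :
    SW p x (Equiv.swap i j * x) = 2 * p i * p j := by
  unfold SW
  rw [← Finset.sum_product', Finset.univ_product_univ]
  have hne : ((i, j) : Fin N × Fin N) ≠ (j, i) := by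
    intro h
    exact hij (Prod.ext_iff.1 h).1
  rw [← Finset.sum_subset (Finset.subset_univ ({(i, j), (j, i)} : Finset (Fin N × Fin N)))]
  · rw [Finset.sum_pair hne]
    simp only [Equiv.swap_comm j i, if_true]; ring
  · rintro ⟨k, l⟩ _ h
    rw [if_neg, mul_zero]
    intro h'
    rw [mul_left_inj, swap_eq_swap hij] at h'
    apply h
    simpa using h'

lemma SW_self (x : Equiv.Perm (Fin N)) : SW p x x = ∑ i, p i ^ 2 := by
  unfold SW
  refine Finset.sum_congr rfl fun i _ => ?_
  rw [Finset.sum_eq_single i]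
  · have e : Equiv.swap i i = 1 := Equiv.swap_self i
    rw [e, one_mul, if_pos rfl]; ring
  · intro j _ hj
    rw [if_neg, mul_zero]
    intro h
    have h' := (mul_eq_right.1 h.symm)
    rw [Equiv.swap_eq_one_iff] at h'
    exact hj h'.symm
  · simp

def pw (a b : ℝ) (A : Finset (Fin N)) : Fin N → ℝ := fun i => (if i ∈ A then a else b) / N

lemma transMat_eq_SW (a b : ℝ) (A : Finset (Fin N)) : transMat a b A = SW (pw a b A) := by
  ext x y
  unfold transMat
  split_ifs with h1 h2 h3 h4
  · subst h1
    rw [SW_self]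
    have : ∀ i, pw a b A i ^ 2 = if i ∈ A then a ^ 2 / (N : ℝ) ^ 2 else b ^ 2 / (N : ℝ) ^ 2 := by
      intro i
      unfold pw
      split_ifs <;> rw [div_pow]
    simp only [this]
    rw [Finset.sum_ite]
    simp only [Finset.sum_const, nsmul_eq_mul]
    have e1 : Finset.univ.filter (fun i => i ∈ A) = A := by ext; simp
    have e2 : Finset.univ.filter (fun i => i ∉ A) = Aᶜ := by ext; simp
    rw [e1, e2]; ring
  · obtain ⟨i, j, hij, hi, hj, h⟩ := h2
    rw [mul_inv_eq_iff_eq_mul] at h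
    rw [h, SW_swap x hij]
    simp only [pw, hi, hj, if_true]; ring
  · obtain ⟨i, j, hij, hi, hj, h⟩ := h3
    rw [mul_inv_eq_iff_eq_mul] at h
    rw [h, SW_swap x hij]
    simp only [pw, hi, hj, if_false]; ring
  · obtain ⟨i, j, hi, hj, h⟩ := h4
    have hij : i ≠ j := by rintro rfl; exact hj hi
    rw [mul_inv_eq_iff_eq_mul] at h
    rw [h, SW_swap x hij]
    simp only [pw, hi, hj, if_false, if_true]; ring
  · symm
    refine Finset.sum_eq_zero fun i _ => Finset.sum_eq_zero fun j _ => ?_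
    rw [if_neg, mul_zero]
    intro h
    have hij : i ≠ j := by
      rintro rfl
      have e : Equiv.swap i i = 1 := Equiv.swap_self i
      apply h1; rw [h, e, one_mul]
    rw [← mul_inv_eq_iff_eq_mul] at h
    by_cases hi : i ∈ A <;> by_cases hj : j ∈ A
    · exact h2 ⟨i, j, hij, hi, hj, h⟩
    · exact h4 ⟨i, j, hi, hj, h⟩
    · exact h4 ⟨j, i, hj, hi, by rw [h, Equiv.swap_comm]⟩
    · exact h3 ⟨i, j, hij, hi, hj, h⟩

end gen2

section expl
variable {n : ℕ} {a b : ℝ} {A : Finset (Fin (2 * n))}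

lemma sum_AB (hA : A.card = n) (f g : ℝ) :
    ∑ i, (if i ∈ A then f else g) = n * f + n * g := by
  rw [Finset.sum_ite]
  simp only [Finset.sum_const, nsmul_eq_mul]
  have e1 : Finset.univ.filter (fun i => i ∈ A) = A := by ext; simp
  have e2 : Finset.univ.filter (fun i => i ∉ A) = Aᶜ := by ext; simp
  have e3 : Aᶜ.card = n := by rw [Finset.card_compl, hA, Fintype.card_fin]; omega
  rw [e1, e2, e3, hA]

def sK (n : ℕ) (a b : ℝ) (A : Finset (Fin (2 * n))) (K : ℕ) (x y : Fin (2 * n)) : ℝ :=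
  if y ∈ A then
    (if x ∈ A then ((1 + (1 - 2 * (a * b) / (2 * n)) ^ K) / 2 - (1 - 2 * a / (2 * n)) ^ K) / n
      else (1 - (1 - 2 * (a * b) / (2 * n)) ^ K) / 2 / n)
  else
    (if x ∈ A then (1 - (1 - 2 * (a * b) / (2 * n)) ^ K) / 2 / n
      else ((1 + (1 - 2 * (a * b) / (2 * n)) ^ K) / 2 - (1 - 2 * b / (2 * n)) ^ K) / n)

lemma q1_pow (hn : 0 < n) (hA : A.card = n) (hab : a + b = 2) (K : ℕ) (x y : Fin (2 * n)) :
    (q1 (pw a b A) ^ K) x y = (if x = y then (1 - 2 * pw a b A x) ^ K else 0) + sK n a b A K x y := by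
  have hn' : (n : ℝ) ≠ 0 := by positivity
  have hb : b = 2 - a := by linarith
  induction K generalizing y with
  | zero =>
    simp only [pow_zero, Matrix.one_apply, sK]
    simp
  | succ K ih =>
    rw [pow_succ, Matrix.mul_apply]
    have h1 : ∀ z, (q1 (pw a b A) ^ K) x z * q1 (pw a b A) z y
        = 2 * pw a b A y * ((q1 (pw a b A) ^ K) x z * pw a b A z)
          + (if z = y then (q1 (pw a b A) ^ K) x z * (1 - 2 * pw a b A z) else 0) := by
      intro z
      unfold q1
      split_ifs <;> ring
    simp only [h1]
    rw [Finset.sum_add_distrib, ← Finset.mul_sum]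
    simp only [Finset.sum_ite_eq', Finset.mem_univ, if_true]
    have h2 : ∑ z, (q1 (pw a b A) ^ K) x z * pw a b A z
        = (1 - 2 * pw a b A x) ^ K * pw a b A x + ∑ z, sK n a b A K x z * pw a b A z := by
      simp only [ih, add_mul, Finset.sum_add_distrib, ite_mul, zero_mul]
      simp
    have h3 : ∑ z, sK n a b A K x z * pw a b A z = ∑ z, (if z ∈ A then
        (if x ∈ A then ((1 + (1 - 2 * (a * b) / (2 * n)) ^ K) / 2 - (1 - 2 * a / (2 * n)) ^ K) / n
      else (1 - (1 - 2 * (a * b) / (2 * n)) ^ K) / 2 / n) * (a / (2 * n)) else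
      (if x ∈ A then (1 - (1 - 2 * (a * b) / (2 * n)) ^ K) / 2 / n
      else ((1 + (1 - 2 * (a * b) / (2 * n)) ^ K) / 2 - (1 - 2 * b / (2 * n)) ^ K) / n)
        * (b / (2 * n))) := by
      refine Finset.sum_congr rfl fun z _ => ?_
      unfold sK pw
      push_cast
      split_ifs <;> rfl
    rw [h2, h3, sum_AB hA, ih y]
    simp only [pow_succ, sK]
    have hpx : pw a b A x = (if x ∈ A then a else b) / (2 * n) := by
      unfold pw; push_cast; rfl
    have hpy : pw a b A y = (if y ∈ A then a else b) / (2 * n) := by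
      unfold pw; push_cast; rfl
    by_cases hxy : x = y
    · subst hxy
      simp only [hpx, if_true]
      by_cases hx : x ∈ A
      · simp only [hx, if_true, mul_div_assoc']
        generalize (1 - 2 * a / (2 * n)) ^ K = u
        generalize (1 - 2 * (a * b) / (2 * n)) ^ K = w
        subst hb
        field_simp
        ring
      · simp only [hx, if_false, mul_div_assoc']
        generalize (1 - 2 * b / (2 * n)) ^ K = u
        generalize (1 - 2 * (a * b) / (2 * n)) ^ K = w
        subst hb
        field_simp
        ring
    · simp only [hpx, hpy, hxy, if_false]
      by_cases hx : x ∈ A <;> by_cases hy : y ∈ A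
      all_goals
        simp only [hx, hy, if_false, if_true, mul_div_assoc']
        generalize (1 - 2 * b / (2 * n)) ^ K = u
        generalize (1 - 2 * a / (2 * n)) ^ K = v
        generalize (1 - 2 * (a * b) / (2 * n)) ^ K = w
        subst hb
        field_simp
        ring

lemma q1_pow_diag (hn : 0 < n) (hA : A.card = n) (hab : a + b = 2) (K : ℕ) (x : Fin (2 * n)) :
    (q1 (pw a b A) ^ K) x x = if x ∈ A then
        (1 - 2 * a / (2 * n)) ^ K +
          ((1 + (1 - 2 * (a * b) / (2 * n)) ^ K) / 2 - (1 - 2 * a / (2 * n)) ^ K) / n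
      else (1 - 2 * b / (2 * n)) ^ K +
          ((1 + (1 - 2 * (a * b) / (2 * n)) ^ K) / 2 - (1 - 2 * b / (2 * n)) ^ K) / n := by
  rw [q1_pow hn hA hab, if_pos rfl]
  unfold sK pw
  push_cast
  split_ifs <;> rw [mul_div_assoc']

lemma q1_trace (hn : 0 < n) (hA : A.card = n) (hab : a + b = 2) (K : ℕ) :
    Matrix.trace (q1 (pw a b A) ^ K) = n * (1 - 2 * a / (2 * n)) ^ K + n * (1 - 2 * b / (2 * n)) ^ K
      + 1 + (1 - 2 * (a * b) / (2 * n)) ^ K - (1 - 2 * a / (2 * n)) ^ K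
      - (1 - 2 * b / (2 * n)) ^ K := by
  have hn' : (n : ℝ) ≠ 0 := by positivity
  simp only [Matrix.trace, Matrix.diag_apply, q1_pow_diag hn hA hab]
  rw [sum_AB hA]
  field_simp
  ring

lemma q1_diag_le (hn : 0 < n) (hA : A.card = n) (hab : a + b = 2) (hb : 0 < b) (hba : b < a)
    (hn2 : 2 ≤ n) (K : ℕ) (x : Fin (2 * n)) :
    (q1 (pw a b A) ^ K) x x ≤ (1 - 2 * b / (2 * n)) ^ K + 1 / n := by
  have hn' : (0 : ℝ) < n := by positivity
  have hn2' : (2 : ℝ) ≤ n := by exact_mod_cast hn2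
  have ha0 : 0 ≤ 1 - 2 * a / (2 * n) := by
    rw [sub_nonneg, div_le_one (by positivity)]; nlinarith
  have hab' : 1 - 2 * a / (2 * n) ≤ 1 - 2 * b / (2 * (n : ℝ)) := by
    gcongr
  have hc1 : (a * b) ≤ 1 := by nlinarith [sq_nonneg (a - b)]
  have hc0 : 0 ≤ 1 - 2 * (a * b) / (2 * n) := by
    rw [sub_nonneg, div_le_one (by positivity)]; nlinarith
  have hc2 : 1 - 2 * (a * b) / (2 * n) ≤ 1 := by
    have : 0 ≤ 2 * (a * b) / (2 * (n : ℝ)) := by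
      have : 0 < a := by linarith
      positivity
    linarith
  have e1 : (1 - 2 * a / (2 * n)) ^ K ≤ (1 - 2 * b / (2 * n)) ^ K := pow_le_pow_left₀ ha0 hab' K
  have e0 : 0 ≤ (1 - 2 * a / (2 * n)) ^ K := pow_nonneg ha0 K
  have e2 : (1 - 2 * (a * b) / (2 * n)) ^ K ≤ 1 := pow_le_one₀ hc0 hc2
  rw [q1_pow_diag hn hA hab]
  split_ifs
  · refine add_le_add e1 ?_
    gcongr; linarith
  · refine add_le_add le_rfl ?_
    gcongr; linarith

end expl


lemma lim_of_bonf (P : ℕ → ℝ) (S R : ℕ → ℕ → ℝ) (s r : ℕ → ℝ) (l : ℝ)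
    (hb : ∀ J n, |P n - S J n| ≤ R J n)
    (hS : ∀ J, Filter.Tendsto (S J) Filter.atTop (nhds (s J)))
    (hR : ∀ J, Filter.Tendsto (R J) Filter.atTop (nhds (r J)))
    (hs : Filter.Tendsto s Filter.atTop (nhds l)) (hr : Filter.Tendsto r Filter.atTop (nhds 0)) :
    Filter.Tendsto P Filter.atTop (nhds l) := by
  rw [Metric.tendsto_atTop']
  intro η hη
  have h1 := hs.eventually (Metric.ball_mem_nhds l (show 0 < η / 4 by linarith))
  have h2 := hr.eventually (Metric.ball_mem_nhds 0 (show 0 < η / 4 by linarith))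
  obtain ⟨J, hJ1, hJ2⟩ := (h1.and h2).exists
  have h3 := (hS J).eventually (Metric.ball_mem_nhds _ (show 0 < η / 4 by linarith))
  have h4 := (hR J).eventually (Metric.ball_mem_nhds _ (show 0 < η / 4 by linarith))
  obtain ⟨n₀, hn₀⟩ := Filter.eventually_atTop.1 (h3.and h4)
  refine ⟨n₀, fun n hn => ?_⟩
  obtain ⟨h5, h6⟩ := hn₀ n hn.le
  have h7 := hb J n
  simp only [Real.dist_eq, Metric.mem_ball] at *
  rw [abs_lt] at *
  rw [abs_le] at h7
  constructor <;> linarith [h7.1, h7.2, h5.1, h5.2, h6.1, h6.2, hJ1.1, hJ1.2, hJ2.1, hJ2.2]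

lemma bonf_term (X k j : ℕ) : ((X.descFactorial (k + j) : ℕ) : ℝ) / (k.factorial * j.factorial)
    = (X.choose k : ℝ) * ((X - k).choose j : ℝ) := by
  have h := Nat.descFactorial_mul_descFactorial (n := X) (Nat.le_add_right k j)
  rw [Nat.add_sub_cancel_left, Nat.descFactorial_eq_factorial_mul_choose,
    Nat.descFactorial_eq_factorial_mul_choose] at h
  rw [← h]
  have h1 : (k.factorial : ℝ) ≠ 0 := by positivity
  have h2 : (j.factorial : ℝ) ≠ 0 := by positivity
  push_cast
  field_simp

lemma alt_choose (M J : ℕ) (hM : M ≠ 0) :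
    |∑ j ∈ Finset.range J, (-1 : ℝ) ^ j * (M.choose j : ℝ)| ≤ (M.choose J : ℝ) := by
  obtain ⟨M, rfl⟩ := Nat.exists_eq_succ_of_ne_zero hM
  rcases J with _ | J
  · simp
  · have h := Int.alternating_sum_range_choose_eq_choose (n := M) (m := J)
    have h' : ∑ j ∈ Finset.range (J + 1), (-1 : ℝ) ^ j * ((M + 1).choose j : ℝ)
        = (-1) ^ J * (M.choose J : ℝ) := by exact_mod_cast h
    rw [Nat.succ_eq_add_one, h', abs_mul, abs_pow, abs_neg, abs_one, one_pow, one_mul, Nat.abs_cast,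
      Nat.choose_succ_succ]
    push_cast
    have : (0 : ℝ) ≤ (M.choose (J + 1) : ℝ) := by positivity
    linarith

lemma bonf_pointwise (X k J : ℕ) :
    |(if X = k then (1 : ℝ) else 0) - ∑ j ∈ Finset.range J,
      (-1) ^ j * (((X.descFactorial (k + j) : ℕ) : ℝ) / (k.factorial * j.factorial))|
      ≤ ((X.descFactorial (k + J) : ℕ) : ℝ) / (k.factorial * J.factorial) := by
  simp only [bonf_term]
  have e : ∑ j ∈ Finset.range J, (-1 : ℝ) ^ j * ((X.choose k : ℝ) * ((X - k).choose j : ℝ))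
      = (X.choose k : ℝ) * ∑ j ∈ Finset.range J, (-1 : ℝ) ^ j * ((X - k).choose j : ℝ) := by
    rw [Finset.mul_sum]; exact Finset.sum_congr rfl fun j _ => by ring
  rw [e]
  rcases lt_trichotomy X k with h | h | h
  · rw [if_neg h.ne, Nat.choose_eq_zero_of_lt h]; simp
  · subst h
    rcases J with _ | J
    · simp
    · rw [Finset.sum_range_succ']
      simp
  · rw [if_neg h.ne', zero_sub, abs_neg, abs_mul, Nat.abs_cast]
    exact mul_le_mul_of_nonneg_left (alt_choose _ _ (by omega)) (by positivity)

/-- limits of the series -/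
lemma series_lim (L : ℝ) (k : ℕ) : Filter.Tendsto
    (fun J : ℕ => ∑ j ∈ Finset.range J, (-1) ^ j * (L ^ (k + j) / (k.factorial * j.factorial)))
    Filter.atTop (nhds (Real.exp (-L) * L ^ k / k.factorial)) := by
  have h : HasSum (fun j : ℕ => (-L) ^ j / j.factorial) (Real.exp (-L)) := by
    rw [Real.exp_eq_exp_ℝ]
    exact NormedSpace.expSeries_div_hasSum_exp (-L)
  have h2 := (h.tendsto_sum_nat).mul_const (L ^ k / k.factorial)
  rw [mul_div_assoc]
  refine h2.congr fun J => ?_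
  rw [Finset.sum_mul]
  refine Finset.sum_congr rfl fun j _ => ?_
  rw [neg_pow, pow_add]
  field_simp

lemma rem_lim (L : ℝ) (k : ℕ) : Filter.Tendsto
    (fun J : ℕ => L ^ (k + J) / (k.factorial * J.factorial)) Filter.atTop (nhds 0) := by
  have h := (FloorSemiring.tendsto_pow_div_factorial_atTop L).const_mul (L ^ k / k.factorial)
  rw [mul_zero] at h
  refine h.congr fun J => ?_
  rw [pow_add]; field_simp

/-! ### asymptotics -/

lemma two_n_atTop : Filter.Tendsto (fun n : ℕ => 2 * (n : ℝ)) Filter.atTop Filter.atTop :=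
  (tendsto_natCast_atTop_atTop).const_mul_atTop (by norm_num)

lemma log_div_lim : Filter.Tendsto (fun n : ℕ => Real.log (2 * n) / (2 * n))
    Filter.atTop (nhds 0) :=
  (Real.isLittleO_log_id_atTop.tendsto_div_nhds_zero).comp two_n_atTop

lemma log_div_sqrt_lim : Filter.Tendsto (fun n : ℕ => Real.log (2 * n) / Real.sqrt (2 * n))
    Filter.atTop (nhds 0) := by
  have := ((isLittleO_log_rpow_atTop (show (0 : ℝ) < 1 / 2 by norm_num)).tendsto_div_nhds_zero).comp
    two_n_atTop
  refine this.congr fun n => ?_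
  simp [Real.sqrt_eq_rpow]

lemma inv_lim : Filter.Tendsto (fun n : ℕ => 1 / (2 * (n : ℝ))) Filter.atTop (nhds 0) := by
  exact (two_n_atTop.inv_tendsto_atTop).congr fun n => by simp only [Pi.inv_apply, one_div]

lemma inv_sqrt_lim : Filter.Tendsto (fun n : ℕ => 1 / Real.sqrt (2 * (n : ℝ)))
    Filter.atTop (nhds 0) := by
  exact ((Real.tendsto_sqrt_atTop.comp two_n_atTop).inv_tendsto_atTop).congr fun n => by
    simp only [Pi.inv_apply, one_div, Function.comp]

def KK (b c : ℝ) (n : ℕ) : ℕ := ⌊((2 * n : ℝ) / (2 * b)) * (Real.log (2 * n) - c)⌋₊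

lemma log_lim : Filter.Tendsto (fun n : ℕ => Real.log (2 * n)) Filter.atTop Filter.atTop :=
  Real.tendsto_log_atTop.comp two_n_atTop

lemma KK_bounds (b c : ℝ) (hb : 0 < b) : ∀ᶠ n : ℕ in Filter.atTop,
    (KK b c n : ℝ) ≤ ((2 * n : ℝ) / (2 * b)) * (Real.log (2 * n) - c) ∧
    ((2 * n : ℝ) / (2 * b)) * (Real.log (2 * n) - c) - 1 ≤ KK b c n := by
  filter_upwards [log_lim.eventually_ge_atTop c] with n hn
  have h0 : 0 ≤ ((2 * n : ℝ) / (2 * b)) * (Real.log (2 * n) - c) :=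
    mul_nonneg (by positivity) (by linarith)
  have h1 := Nat.lt_floor_add_one (((2 * n : ℝ) / (2 * b)) * (Real.log (2 * n) - c))
  refine ⟨Nat.floor_le h0, ?_⟩
  unfold KK
  linarith

lemma lim_exponent (b c s : ℝ) (hb : 0 < b) (hs : 0 < s) : Filter.Tendsto
    (fun n : ℕ => (s / b) * Real.log (2 * n) + KK b c n * Real.log (1 - 2 * s / (2 * n)))
    Filter.atTop (nhds (s / b * c)) := by
  have hx : Filter.Tendsto (fun n : ℕ => 2 * s / (2 * (n : ℝ))) Filter.atTop (nhds 0) := by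
    have := inv_lim.const_mul (2 * s)
    rw [mul_zero] at this
    exact this.congr fun n => by ring
  have hlo : Filter.Tendsto (fun n : ℕ => s / b * c -
      2 * ((s / b) * (2 * s) * (Real.log (2 * n) / (2 * n) - c * (1 / (2 * n)))))
      Filter.atTop (nhds (s / b * c)) := by
    have := ((log_div_lim.sub (inv_lim.const_mul c)).const_mul ((s / b) * (2 * s))).const_mul 2
    have := this.const_sub (s / b * c)
    simpa using this
  have hhi : Filter.Tendsto (fun n : ℕ => s / b * c + 2 * s / (2 * (n : ℝ)))
      Filter.atTop (nhds (s / b * c)) := by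
    simpa using hx.const_add (s / b * c)
  have hev : ∀ᶠ n : ℕ in Filter.atTop, 2 * s / (2 * (n : ℝ)) ≤ 1 / 2 :=
    hx.eventually (eventually_le_nhds (by norm_num))
  refine tendsto_of_tendsto_of_tendsto_of_le_of_le' hlo hhi ?_ ?_
  · filter_upwards [KK_bounds b c hb, hev, Filter.eventually_gt_atTop 0] with n hK hn hn0
    have hn' : (0 : ℝ) < n := by exact_mod_cast hn0
    set x := 2 * s / (2 * (n : ℝ)) with hxdef
    have hx0 : 0 < x := by positivity
    have hlog : -x - 2 * x ^ 2 ≤ Real.log (1 - x) := by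
      have h1 := Real.one_sub_inv_le_log_of_pos (show 0 < 1 - x by linarith)
      refine le_trans ?_ h1
      have h2 : 1 - (1 - x)⁻¹ = -x / (1 - x) := by
        have : 1 - x ≠ 0 := by linarith
        field_simp; ring
      rw [h2, le_div_iff₀ (by linarith)]
      nlinarith [mul_pos hx0 hx0]
    have hKn : (0 : ℝ) ≤ KK b c n := by positivity
    have h3 : (KK b c n : ℝ) * (-x - 2 * x ^ 2) ≤ KK b c n * Real.log (1 - x) :=
      mul_le_mul_of_nonneg_left hlog hKn
    have h4 : (KK b c n : ℝ) * x ≤ s / b * (Real.log (2 * n) - c) := by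
      have := mul_le_mul_of_nonneg_right hK.1 hx0.le
      refine this.trans (le_of_eq ?_)
      rw [hxdef]; field_simp
    have h5 : (KK b c n : ℝ) * x * x ≤ s / b * (Real.log (2 * n) - c) * x :=
      mul_le_mul_of_nonneg_right h4 hx0.le
    have h6 : (s / b) * (2 * s) * (Real.log (2 * n) / (2 * n) - c * (1 / (2 * n)))
        = s / b * (Real.log (2 * n) - c) * x := by
      rw [hxdef]; field_simp
    rw [h6]
    nlinarith
  · filter_upwards [KK_bounds b c hb, hev, Filter.eventually_gt_atTop 0] with n hK hn hn0
    have hn' : (0 : ℝ) < n := by exact_mod_cast hn0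
    set x := 2 * s / (2 * (n : ℝ)) with hxdef
    have hx0 : 0 < x := by positivity
    have hlog : Real.log (1 - x) ≤ -x := by
      have := Real.log_le_sub_one_of_pos (show 0 < 1 - x by linarith)
      linarith
    have hKn : (0 : ℝ) ≤ KK b c n := by positivity
    have h3 : KK b c n * Real.log (1 - x) ≤ (KK b c n : ℝ) * (-x) :=
      mul_le_mul_of_nonneg_left hlog hKn
    have h4 : s / b * (Real.log (2 * n) - c) - x ≤ (KK b c n : ℝ) * x := by
      have := mul_le_mul_of_nonneg_right hK.2 hx0.le
      refine le_trans (le_of_eq ?_) this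
      rw [hxdef]; field_simp
    nlinarith

lemma lim_pow (b c s : ℝ) (hb : 0 < b) (hs : 0 < s) : Filter.Tendsto
    (fun n : ℕ => Real.exp ((s / b) * Real.log (2 * n)) * (1 - 2 * s / (2 * n)) ^ KK b c n)
    Filter.atTop (nhds (Real.exp (s / b * c))) := by
  have h := (Real.continuous_exp.tendsto _).comp (lim_exponent b c s hb hs)
  refine h.congr' ?_
  filter_upwards [Filter.eventually_gt_atTop (Nat.ceil s)] with n hn
  have hn1 : s < n := Nat.lt_of_ceil_lt hn
  have hpos : 0 < 1 - 2 * s / (2 * (n : ℝ)) := by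
    rw [sub_pos, div_lt_one (by linarith)]; linarith
  simp only [Function.comp]
  rw [Real.exp_add, Real.exp_nat_mul, Real.exp_log hpos]

lemma exp_neg_log_lim (κ : ℝ) (hκ : 0 < κ) : Filter.Tendsto
    (fun n : ℕ => Real.exp (-(κ * Real.log (2 * n)))) Filter.atTop (nhds 0) :=
  Real.tendsto_exp_neg_atTop_nhds_zero.comp (log_lim.const_mul_atTop hκ)

lemma pow_lim_zero (b c s : ℝ) (hb : 0 < b) (hs : 0 < s) : Filter.Tendsto
    (fun n : ℕ => (1 - 2 * s / (2 * (n : ℝ))) ^ KK b c n) Filter.atTop (nhds 0) := by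
  have := (lim_pow b c s hb hs).mul (exp_neg_log_lim (s / b) (by positivity))
  rw [mul_zero] at this
  refine this.congr fun n => ?_
  rw [Real.exp_neg]
  field_simp

lemma beta_lim (b c : ℝ) (hb : 0 < b) : Filter.Tendsto
    (fun n : ℕ => 2 * (n : ℝ) * (1 - 2 * b / (2 * (n : ℝ))) ^ KK b c n)
    Filter.atTop (nhds (Real.exp c)) := by
  have := lim_pow b c b hb hb
  rw [div_self hb.ne', one_mul] at this
  refine this.congr' ?_
  filter_upwards [Filter.eventually_gt_atTop 0] with n hn
  have hn' : (0 : ℝ) < n := by exact_mod_cast hn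
  rw [one_mul, Real.exp_log (by positivity)]

lemma alpha_lim (a b c : ℝ) (hb : 0 < b) (hba : b < a) : Filter.Tendsto
    (fun n : ℕ => (n : ℝ) * (1 - 2 * a / (2 * (n : ℝ))) ^ KK b c n)
    Filter.atTop (nhds 0) := by
  have ha : 0 < a := by linarith
  have hκ : 0 < a / b - 1 := by rw [sub_pos, one_lt_div hb]; exact hba
  have := ((lim_pow b c a hb ha).mul (exp_neg_log_lim _ hκ)).mul_const (1 / 2)
  rw [mul_zero, zero_mul] at this
  refine this.congr' ?_
  filter_upwards [Filter.eventually_gt_atTop 0] with n hn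
  have hn' : (0 : ℝ) < n := by exact_mod_cast hn
  have : Real.exp (a / b * Real.log (2 * n)) * Real.exp (-((a / b - 1) * Real.log (2 * n)))
      = 2 * n := by
    rw [← Real.exp_add]
    ring_nf
    rw [Real.exp_log (by positivity)]
  calc _ = (Real.exp (a / b * Real.log (2 * n)) * Real.exp (-((a / b - 1) * Real.log (2 * n))))
        * (1 - 2 * a / (2 * (n : ℝ))) ^ KK b c n * (1 / 2) := by ring
    _ = _ := by rw [this]; ring

lemma trace_lim (a b c : ℝ) (hb : 0 < b) (hba : b < a) : Filter.Tendsto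
    (fun n : ℕ => n * (1 - 2 * a / (2 * n)) ^ KK b c n + n * (1 - 2 * b / (2 * n)) ^ KK b c n
      + 1 + (1 - 2 * (a * b) / (2 * n)) ^ KK b c n - (1 - 2 * a / (2 * n)) ^ KK b c n
      - (1 - 2 * b / (2 * n)) ^ KK b c n)
    Filter.atTop (nhds (1 + Real.exp c / 2)) := by
  have ha : 0 < a := by linarith
  have h1 := alpha_lim a b c hb hba
  have h2 := (beta_lim b c hb).div_const 2
  have h3 := pow_lim_zero b c (a * b) hb (by positivity)
  have h4 := pow_lim_zero b c a hb ha
  have h5 := pow_lim_zero b c b hb hb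
  have := ((((h1.add h2).add_const 1).add h3).sub h4).sub h5
  have e : (0 + Real.exp c / 2 + 1 + 0 - 0 - 0) = 1 + Real.exp c / 2 := by ring
  rw [e] at this
  refine this.congr fun n => by ring

lemma desc_lim (m : ℕ) : Filter.Tendsto
    (fun n : ℕ => 1 - (((2 * n).descFactorial m : ℕ) : ℝ) / (2 * (n : ℝ)) ^ m)
    Filter.atTop (nhds 0) := by
  have h1 : Filter.Tendsto (fun n : ℕ => 1 - (1 - m * (1 / (2 * (n : ℝ)))) ^ m)
      Filter.atTop (nhds 0) := by
    have := (((inv_lim.const_mul (m : ℝ)).const_sub 1).pow m).const_sub 1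
    simpa using this
  refine tendsto_of_tendsto_of_tendsto_of_le_of_le' tendsto_const_nhds h1 ?_ ?_
  · filter_upwards [Filter.eventually_gt_atTop 0] with n hn
    have hn' : (0 : ℝ) < n := by exact_mod_cast hn
    rw [sub_nonneg, div_le_one (by positivity)]
    have := Nat.descFactorial_le_pow (2 * n) m
    exact_mod_cast this
  · filter_upwards [Filter.eventually_gt_atTop 0, Filter.eventually_gt_atTop m] with n hn hm
    have hn' : (0 : ℝ) < n := by exact_mod_cast hn
    have hm' : (m : ℝ) < n := by exact_mod_cast hm
    have := Nat.pow_sub_le_descFactorial (2 * n) m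
    have h2 : ((2 * n + 1 - m : ℕ) : ℝ) ^ m ≤ (((2 * n).descFactorial m : ℕ) : ℝ) := by
      exact_mod_cast this
    rw [Nat.cast_sub (by omega)] at h2
    push_cast at h2
    have h3 : (2 * (n : ℝ) - m) ^ m ≤ (2 * (n : ℝ) + 1 - m) ^ m :=
      pow_le_pow_left₀ (by linarith) (by linarith) m
    have h4 : (1 - m * (1 / (2 * (n : ℝ)))) ^ m = (2 * (n : ℝ) - m) ^ m / (2 * (n : ℝ)) ^ m := by
      rw [← div_pow]; congr 1; field_simp
    rw [h4]
    gcongr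
    exact h3.trans h2

lemma err_lim (b c : ℝ) (hb : 0 < b) (m : ℕ) : Filter.Tendsto
    (fun n : ℕ => ((2 * (n : ℝ)) ^ m - ((2 * n).descFactorial m : ℕ)) *
      ((1 - 2 * b / (2 * (n : ℝ))) ^ KK b c n + 1 / n) ^ m)
    Filter.atTop (nhds 0) := by
  have h := (desc_lim m).mul (((beta_lim b c hb).add_const 2).pow m)
  rw [zero_mul] at h
  refine h.congr' ?_
  filter_upwards [Filter.eventually_gt_atTop 0] with n hn
  have hn' : (0 : ℝ) < n := by exact_mod_cast hn
  have e : 2 * (n : ℝ) * (1 - 2 * b / (2 * (n : ℝ))) ^ KK b c n + 2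
      = (2 * n) * ((1 - 2 * b / (2 * (n : ℝ))) ^ KK b c n + 1 / n) := by field_simp
  rw [e]
  generalize (1 - 2 * b / (2 * (n : ℝ))) ^ KK b c n + 1 / (n : ℝ) = Z
  rw [mul_pow (2 * (n : ℝ)) Z m, one_sub_div (by positivity), ← mul_assoc,
    div_mul_cancel₀ _ (by positivity)]

lemma rho_lim (b c : ℝ) (hb : 0 < b) (C : ℝ) (hC : 0 ≤ C) : Filter.Tendsto
    (fun n : ℕ => (1 + 2 * (C / (2 * n * Real.sqrt (2 * n)))) ^ KK b c n)
    Filter.atTop (nhds 1) := by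
  have h1 : Filter.Tendsto (fun n : ℕ => Real.exp ((C / b) *
      (Real.log (2 * n) / Real.sqrt (2 * n) - c * (1 / Real.sqrt (2 * n)))))
      Filter.atTop (nhds 1) := by
    have := ((log_div_sqrt_lim.sub (inv_sqrt_lim.const_mul c)).const_mul (C / b))
    have := (Real.continuous_exp.tendsto _).comp this
    rw [mul_zero, sub_zero, mul_zero, Real.exp_zero] at this
    exact this
  refine tendsto_of_tendsto_of_tendsto_of_le_of_le' tendsto_const_nhds h1 ?_ ?_
  · refine Filter.Eventually.of_forall fun n => ?_
    refine one_le_pow₀ ?_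
    have : 0 ≤ 2 * (C / (2 * n * Real.sqrt (2 * n))) := by positivity
    linarith
  · filter_upwards [Filter.eventually_gt_atTop 0, KK_bounds b c hb] with n hn hK
    have hn' : (0 : ℝ) < n := by exact_mod_cast hn
    have hsq : 0 < Real.sqrt (2 * n) := Real.sqrt_pos.2 (by positivity)
    set y := 2 * (C / (2 * n * Real.sqrt (2 * n))) with hy
    have hy0 : 0 ≤ y := by positivity
    calc (1 + y) ^ KK b c n ≤ (Real.exp y) ^ KK b c n := by
          refine pow_le_pow_left₀ (by linarith) ?_ _
          linarith [Real.add_one_le_exp y]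
      _ = Real.exp (KK b c n * y) := by rw [Real.exp_nat_mul]
      _ ≤ _ := by
          rw [Real.exp_le_exp]
          refine (mul_le_mul_of_nonneg_right hK.1 hy0).trans (le_of_eq ?_)
          rw [hy]; field_simp


lemma pw_nonneg {N : ℕ} (a b : ℝ) (ha : 0 ≤ a) (hb : 0 ≤ b) (A : Finset (Fin N)) (i : Fin N) :
    0 ≤ pw a b A i := by
  unfold pw
  split_ifs <;> positivity

lemma FM_lim (a b : ℝ) (hb : 0 < b) (hba : b < a) (hab : a + b = 2)
    (c : ℝ) (A : (n : ℕ) → Finset (Fin (2 * n))) (hA : ∀ n, (A n).card = n) (m : ℕ) :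
    Filter.Tendsto (fun n : ℕ => FM (pw a b (A n)) (KK b c n) m) Filter.atTop
      (nhds ((1 + Real.exp c / 2) ^ m)) := by
  have ha : 0 < a := by linarith
  set C : ℝ := 48 * ((m : ℝ) + 1) ^ 2 with hC
  have hC0 : 0 ≤ C := by positivity
  have hτ := (trace_lim a b c hb hba).pow m
  have hρ := rho_lim b c hb C hC0
  have he := err_lim b c hb m
  have hlo := (hτ.div hρ one_ne_zero).sub he
  have hhi := hρ.mul hτ
  rw [div_one, sub_zero] at hlo
  rw [one_mul] at hhi
  have key : ∀ᶠ n : ℕ in Filter.atTop,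
      Matrix.trace (Qt (pw a b (A n)) m ^ KK b c n) ≤
        (1 + 2 * (C / (2 * n * Real.sqrt (2 * n)))) ^ KK b c n *
          Matrix.trace (q1 (pw a b (A n)) ^ KK b c n) ^ m ∧
      Matrix.trace (q1 (pw a b (A n)) ^ KK b c n) ^ m ≤
        (1 + 2 * (C / (2 * n * Real.sqrt (2 * n)))) ^ KK b c n *
          Matrix.trace (Qt (pw a b (A n)) m ^ KK b c n) ∧
      FM (pw a b (A n)) (KK b c n) m ≤ Matrix.trace (Qt (pw a b (A n)) m ^ KK b c n) ∧
      Matrix.trace (Qt (pw a b (A n)) m ^ KK b c n) ≤ FM (pw a b (A n)) (KK b c n) m +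
        ((2 * (n : ℝ)) ^ m - ((2 * n).descFactorial m : ℕ)) *
          ((1 - 2 * b / (2 * n)) ^ KK b c n + 1 / n) ^ m := by
    filter_upwards [Filter.eventually_ge_atTop (8 * m + 2)] with n hn
    have hn0 : 0 < n := by omega
    have hn2 : 2 ≤ n := by omega
    have hn' : (0 : ℝ) < n := by exact_mod_cast hn0
    have hn2' : (2 : ℝ) ≤ n := by exact_mod_cast hn2
    have hnm : 8 * (m : ℝ) + 2 ≤ n := by exact_mod_cast hn
    have hp := pw_nonneg a b ha.le hb.le (A n)
    have hδ : ∀ i, pw a b (A n) i ≤ 1 / (n : ℝ) := by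
      intro i
      unfold pw
      push_cast
      rw [div_le_div_iff₀ (by positivity) hn']
      split_ifs <;> nlinarith
    have hn3 : 1 / (n : ℝ) ≤ 1 / 2 := one_div_le_one_div_of_le (by norm_num) hn2'
    have hp2 : ∀ i, pw a b (A n) i ≤ 1 / 2 := fun i => (hδ i).trans hn3
    have hs : ∑ i, pw a b (A n) i = 1 := by
      unfold pw
      rw [← Finset.sum_div, sum_AB (hA n), ← mul_add, hab]
      push_cast
      field_simp
    have hsq1 : (1 : ℝ) ≤ Real.sqrt (2 * n) := by
      rw [Real.one_le_sqrt]; linarith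
    have hss : Real.sqrt (2 * n) * Real.sqrt (2 * n) = 2 * n :=
      Real.mul_self_sqrt (by positivity)
    set t := Real.sqrt (2 * n) with ht
    have ht0 : 0 < t := by linarith
    have hm0 : (0 : ℝ) ≤ m := Nat.cast_nonneg m
    have h1 := trace_Qt_RR (m := m) hp hp2 hs (ε := C / (2 * n * t)) hδ
      (by rw [mul_one_div, div_le_div_iff₀ hn' (by norm_num)]; linarith) hsq1
      (by
        have e : 12 * ((m : ℝ) * (1 / n)) ^ 2 * t = (48 * (m : ℝ) ^ 2) / (2 * n * t) := by
          rw [eq_div_iff (by positivity)]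
          calc 12 * ((m : ℝ) * (1 / n)) ^ 2 * t * (2 * n * t)
              = 12 * ((m : ℝ) * (1 / n)) ^ 2 * (2 * n) * (t * t) := by ring
            _ = _ := by rw [hss]; field_simp; ring
        rw [e, hC]
        gcongr
        linarith)
      (by
        rw [hC, div_le_div_iff₀ ht0 (by positivity)]
        have e : 2 * ((m : ℝ) * (1 / n)) * (2 * n * t) = 4 * m * t := by field_simp; ring
        rw [e]
        refine mul_le_mul_of_nonneg_right ?_ ht0.le
        nlinarith)
      (KK b c n)
    rw [RR_trace] at h1
    have h2 := FM_trace hp hp2 (KK b c n) m _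
      (fun x => q1_diag_le hn0 (hA n) hab hb hba hn2 (KK b c n) x)
    refine ⟨h1.1, h1.2, h2.1, ?_⟩
    have := h2.2
    push_cast at this ⊢
    exact this
  refine tendsto_of_tendsto_of_tendsto_of_le_of_le' hlo hhi ?_ ?_
  · filter_upwards [key, Filter.eventually_gt_atTop 0] with n hk hn
    obtain ⟨_, h2, _, h4⟩ := hk
    rw [q1_trace hn (hA n) hab] at h2
    have hpos : 0 < (1 + 2 * (C / (2 * n * Real.sqrt (2 * n)))) ^ KK b c n := by positivity
    have := (div_le_iff₀' hpos).2 h2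
    simp only [Pi.div_apply]
    linarith
  · filter_upwards [key, Filter.eventually_gt_atTop 0] with n hk hn
    obtain ⟨h1, _, h3, _⟩ := hk
    rw [q1_trace hn (hA n) hab] at h1
    exact h3.trans h1


/-- Suppose `b < a`. Fix `c ∈ ℝ` and let `Fix_c` be the number of fixed
points after `K_N = ⌊(N/(2b))(log N − c)⌋` steps of the bRT shuffle started at the
identity, `N = 2n`. Then for every `k`, `ℙ(Fix_c = k) → e^{−(1+e^c/2)} (1+e^c/2)^k / k!`
as `N → ∞`. -/
theorem brt_fixed_points_poisson (a b : ℝ) (hb : 0 < b) (hba : b < a) (hab : a + b = 2)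
    (c : ℝ) (A : (n : ℕ) → Finset (Fin (2 * n))) (hA : ∀ n, (A n).card = n) (k : ℕ) :
    Filter.Tendsto
      (fun n : ℕ =>
        ∑ π ∈ Finset.univ.filter (fun π : Equiv.Perm (Fin (2 * n)) =>
            (Finset.univ.filter fun i => π i = i).card = k),
          (transMat a b (A n) ^
            ⌊((2 * n : ℝ) / (2 * b)) * (Real.log (2 * n) - c)⌋₊) 1 π)
      Filter.atTop
      (nhds (Real.exp (-(1 + Real.exp c / 2)) * (1 + Real.exp c / 2) ^ k /
        (k.factorial : ℝ))) := by
  set L := 1 + Real.exp c / 2 with hL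
  have ha : 0 < a := by linarith
  refine lim_of_bonf _
    (fun J n => ∑ j ∈ Finset.range J,
      (-1) ^ j * (FM (pw a b (A n)) (KK b c n) (k + j) / (k.factorial * j.factorial)))
    (fun J n => FM (pw a b (A n)) (KK b c n) (k + J) / (k.factorial * J.factorial))
    _ _ _ ?_ ?_ ?_ (series_lim L k) (rem_lim L k)
  · intro J n
    have hw : ∀ π, 0 ≤ (SW (pw a b (A n)) ^ KK b c n) 1 π :=
      pow_nonneg_entries _ (SW_nonneg (pw_nonneg a b ha.le hb.le (A n))) _ _
    rw [Finset.sum_filter, transMat_eq_SW]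
    change |(∑ π : Equiv.Perm (Fin (2 * n)),
      if (Finset.univ.filter fun i => π i = i).card = k then
        (SW (pw a b (A n)) ^ KK b c n) 1 π else 0) - _| ≤ _
    have e1 : ∑ j ∈ Finset.range J,
        (-1) ^ j * (FM (pw a b (A n)) (KK b c n) (k + j) / (k.factorial * j.factorial))
        = ∑ π, (SW (pw a b (A n)) ^ KK b c n) 1 π * ∑ j ∈ Finset.range J,
          (-1) ^ j * ((((Finset.univ.filter fun i => π i = i).card.descFactorial (k + j) : ℕ) : ℝ)
            / (k.factorial * j.factorial)) := by
      unfold FM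
      simp only [Finset.mul_sum, Finset.sum_div]
      rw [Finset.sum_comm]
      refine Finset.sum_congr rfl fun π _ => Finset.sum_congr rfl fun j _ => ?_
      ring
    rw [e1, ← Finset.sum_sub_distrib]
    refine (Finset.abs_sum_le_sum_abs _ _).trans ?_
    unfold FM
    rw [Finset.sum_div]
    refine Finset.sum_le_sum fun π _ => ?_
    have h := bonf_pointwise (Finset.univ.filter fun i => π i = i).card k J
    have e2 : (if (Finset.univ.filter fun i => π i = i).card = k then
        (SW (pw a b (A n)) ^ KK b c n) 1 π else 0) = (SW (pw a b (A n)) ^ KK b c n) 1 π *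
        (if (Finset.univ.filter fun i => π i = i).card = k then (1 : ℝ) else 0) := by
      split_ifs <;> simp
    rw [e2, ← mul_sub, abs_mul, abs_of_nonneg (hw π), mul_div_assoc]
    exact mul_le_mul_of_nonneg_left h (hw π)
  · intro J
    refine tendsto_finsetSum _ fun j _ => ?_
    exact ((FM_lim a b hb hba hab c A hA (k + j)).div_const _).const_mul _
  · intro J
    exact (FM_lim a b hb hba hab c A hA (k + J)).div_const _

end BRT
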